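/- Let m be a positive integer, U ⊆ ℝ^m open, let ρ, ν, v, τ : U → ℝ be smooth, and let λ be a real number with λ > 2. Define w : ℝ × U → ℝ by w(t,x) = v(x) f₊^λ(t² − τ(x)²). Then for every (t,x) ∈ ℝ × U, ρ(x) ∂²_t w(t,x) − ∇·(ν ∇w)(t,x) = 4 v(x) τ(x)² (ρ(x) − ν(x)|∇τ(x)|²) · f₊^{λ−2}(t² − τ(x)²) + [ (4λ−2) ρ(x) v(x) + 2 ν(x) τ(x) ∇τ(x)·∇v(x) + 2 ∇·(ν v τ ∇τ)(x) ] · f₊^{λ−1}(t² − τ(x)²) − ∇·(ν ∇v)(x) · f₊^{λ}(t² − τ(x)²). -/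

import Mathlib

/-!
Write `σ = t² - τ²` and `f_μ = gelfandShilov μ`. Two facts about `f_μ` carry the computation:
`f_μ' = f_{μ-1}` everywhere for `μ > 1` (`hasDerivAt_gelfandShilov`), and
`ς f_{μ-1}(ς) = μ f_μ(ς)` (`mul_gelfandShilov`), which is the functional equation of `Γ`.

In time, `∂_t² w = v (2 f_{λ-1}(σ) + 4 t² f_{λ-2}(σ))`; replacing `t²` by `σ + τ²` and absorbing the
factor `σ` turns this into `v ((4λ - 2) f_{λ-1}(σ) + 4 τ² f_{λ-2}(σ))`.

In space, `∇(f_μ(σ)) = -2 τ f_{μ-1}(σ) ∇τ`, so on `U` the flux `ν ∇w` equals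
`f_λ(σ) (ν ∇v) - 2 f_{λ-1}(σ) (ν v τ ∇τ)`, and the product rule
`∇·(gF) = g ∇·F + ∇g·F` (`sdiv_fun_smul`) gives its divergence. Since two derivatives fall on `f_λ`, the
assumption `λ > 2` makes both of them classical, also across `σ = 0`.
-/

open scoped RealInnerProductSpace

/-- The Gelfand–Shilov function `f₊^μ(ς) = ς^μ / Γ(μ+1)` for `ς > 0`, and `0` for `ς ≤ 0`. -/
noncomputable def gelfandShilov (μ : ℝ) (ς : ℝ) : ℝ :=
  if 0 < ς then ς ^ μ / Real.Gamma (μ + 1) else 0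

/-- Divergence of a vector field on `ℝ^m`: the trace of its Fréchet derivative. -/
noncomputable def sdiv {m : ℕ} (F : EuclideanSpace ℝ (Fin m) → EuclideanSpace ℝ (Fin m))
    (x : EuclideanSpace ℝ (Fin m)) : ℝ :=
  ∑ i, fderiv ℝ F x (EuclideanSpace.single i 1) i

/-- The rule `f_μ' = f_{μ-1}`. For `μ > 1` it also holds at the origin, where both one-sided
derivatives vanish. -/
lemma hasDerivAt_gelfandShilov {μ : ℝ} (hμ : 1 < μ) (s : ℝ) :
    HasDerivAt (gelfandShilov μ) (gelfandShilov (μ - 1) s) s := by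
  have hΓ : Real.Gamma (μ + 1) = μ * Real.Gamma μ := Real.Gamma_add_one (by linarith)
  have hΓ0 : Real.Gamma μ ≠ 0 := (Real.Gamma_pos_of_pos (by linarith)).ne'
  have hμ0 : μ ≠ 0 := by linarith
  have hpow : HasDerivAt (fun r : ℝ => r ^ μ / Real.Gamma (μ + 1))
      (μ * s ^ (μ - 1) / Real.Gamma (μ + 1)) s :=
    (Real.hasDerivAt_rpow_const (Or.inr hμ.le)).div_const _
  rcases lt_trichotomy s 0 with hs | hs | hs
  · have h0 : gelfandShilov (μ - 1) s = 0 := if_neg hs.not_gt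
    rw [h0]
    refine (hasDerivAt_const s (0 : ℝ)).congr_of_eventuallyEq ?_
    filter_upwards [Iio_mem_nhds hs] with r hr
    exact if_neg (not_lt.mpr (le_of_lt hr))
  · subst hs
    have h0 : gelfandShilov (μ - 1) 0 = 0 := if_neg (lt_irrefl _)
    have hz : (0 : ℝ) ^ (μ - 1) = 0 := Real.zero_rpow (by linarith)
    rw [hz, mul_zero, zero_div] at hpow
    rw [h0, ← hasDerivWithinAt_univ, ← Set.Iic_union_Ici (a := (0 : ℝ))]
    refine HasDerivWithinAt.union ?_ ?_
    · refine (hasDerivWithinAt_const (0 : ℝ) (Set.Iic 0) (0 : ℝ)).congr (fun r hr => ?_) ?_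
      · exact if_neg (not_lt.mpr hr)
      · exact if_neg (lt_irrefl _)
    · have hEq : ∀ r ∈ Set.Ici (0 : ℝ), gelfandShilov μ r = r ^ μ / Real.Gamma (μ + 1) := by
        intro r hr
        rcases (Set.mem_Ici.mp hr).eq_or_lt with h | h
        · rw [← h, Real.zero_rpow hμ0]
          simp [gelfandShilov]
        · exact if_pos h
      exact hpow.hasDerivWithinAt.congr hEq (hEq 0 Set.self_mem_Ici)
  · have h1 : gelfandShilov (μ - 1) s = μ * s ^ (μ - 1) / Real.Gamma (μ + 1) := by
      rw [gelfandShilov, if_pos hs, hΓ, sub_add_cancel]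
      field_simp
    rw [h1]
    refine hpow.congr_of_eventuallyEq ?_
    filter_upwards [Ioi_mem_nhds hs] with r hr
    exact if_pos hr

lemma mul_gelfandShilov {μ : ℝ} (hμ : 0 < μ) (s : ℝ) :
    s * gelfandShilov (μ - 1) s = μ * gelfandShilov μ s := by
  unfold gelfandShilov
  split_ifs with hs
  · have hΓ0 : Real.Gamma μ ≠ 0 := (Real.Gamma_pos_of_pos hμ).ne'
    rw [sub_add_cancel, Real.Gamma_add_one hμ.ne', Real.rpow_sub_one hs.ne']
    field_simp
  · simp

/-- The product rule `∇·(gF) = g ∇·F + ∇g·F`. -/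
lemma sdiv_fun_smul {m : ℕ} {g : EuclideanSpace ℝ (Fin m) → ℝ}
    {F : EuclideanSpace ℝ (Fin m) → EuclideanSpace ℝ (Fin m)} {x G : EuclideanSpace ℝ (Fin m)}
    (hg : HasGradientAt g G x) (hF : DifferentiableAt ℝ F x) :
    sdiv (fun y => g y • F y) x = g x * sdiv F x + ⟪G, F x⟫ := by
  have h := (hg.hasFDerivAt.fun_smul hF.hasFDerivAt).fderiv
  simp only [sdiv, h, Finset.mul_sum, PiLp.inner_apply, ← Finset.sum_add_distrib]
  refine Finset.sum_congr rfl fun i _ => ?_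
  simp [EuclideanSpace.inner_single_right, mul_comm]

lemma sdiv_fun_sub {m : ℕ} {F G : EuclideanSpace ℝ (Fin m) → EuclideanSpace ℝ (Fin m)}
    {x : EuclideanSpace ℝ (Fin m)} (hF : DifferentiableAt ℝ F x) (hG : DifferentiableAt ℝ G x) :
    sdiv (fun y => F y - G y) x = sdiv F x - sdiv G x := by
  simp [sdiv, fderiv_fun_sub hF hG, Finset.sum_sub_distrib]

lemma sdiv_congr {m : ℕ} {F G : EuclideanSpace ℝ (Fin m) → EuclideanSpace ℝ (Fin m)}
    {x : EuclideanSpace ℝ (Fin m)} (h : F =ᶠ[nhds x] G) : sdiv F x = sdiv G x := by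
  unfold sdiv
  rw [h.fderiv_eq]

/-- The chain rule `∇(f_μ(t² - τ²)) = -2 τ f_{μ-1}(t² - τ²) ∇τ`. -/
lemma hasGradientAt_gelfandShilov_comp {m : ℕ} {τ : EuclideanSpace ℝ (Fin m) → ℝ}
    {x : EuclideanSpace ℝ (Fin m)} {μ : ℝ} (hμ : 1 < μ) (t : ℝ) (hτ : DifferentiableAt ℝ τ x) :
    HasGradientAt (fun y => gelfandShilov μ (t ^ 2 - τ y ^ 2))
      ((-2 * τ x * gelfandShilov (μ - 1) (t ^ 2 - τ x ^ 2)) • gradient τ x) x := by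
  have hout : HasDerivAt (fun r : ℝ => gelfandShilov μ (t ^ 2 - r ^ 2))
      (-2 * τ x * gelfandShilov (μ - 1) (t ^ 2 - τ x ^ 2)) (τ x) := by
    have h1 : HasDerivAt (fun r : ℝ => t ^ 2 - r ^ 2) (-2 * τ x) (τ x) := by
      simpa using ((hasDerivAt_id (τ x)).pow 2).const_sub (t ^ 2)
    rw [mul_comm]
    exact (hasDerivAt_gelfandShilov hμ _).comp (τ x) h1
  rw [hasGradientAt_iff_hasFDerivAt, map_smul]
  exact hout.comp_hasFDerivAt x hτ.hasGradientAt.hasFDerivAt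

lemma hasGradientAt_mul {m : ℕ} {f g : EuclideanSpace ℝ (Fin m) → ℝ}
    {x F G : EuclideanSpace ℝ (Fin m)} (hf : HasGradientAt f F x) (hg : HasGradientAt g G x) :
    HasGradientAt (fun y => f y * g y) (f x • G + g x • F) x := by
  rw [hasGradientAt_iff_hasFDerivAt, map_add, map_smul, map_smul]
  exact hf.hasFDerivAt.mul hg.hasFDerivAt

lemma differentiableAt_gradient {m : ℕ} {U : Set (EuclideanSpace ℝ (Fin m))} (hU : IsOpen U)
    {f : EuclideanSpace ℝ (Fin m) → ℝ} (hf : ContDiffOn ℝ (⊤ : ℕ∞) f U)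
    {x : EuclideanSpace ℝ (Fin m)} (hx : x ∈ U) : DifferentiableAt ℝ (gradient f) x := by
  have h : ContDiffAt ℝ 1 (fderiv ℝ f) x :=
    (hf.contDiffAt (hU.mem_nhds hx)).fderiv_right (m := 1)
      (WithTop.coe_le_coe.mpr (le_top : (1 + 1 : ℕ∞) ≤ ⊤))
  exact (InnerProductSpace.toDual ℝ
    (EuclideanSpace ℝ (Fin m))).symm.toContinuousLinearEquiv.differentiableAt.comp x
      (h.differentiableAt one_ne_zero)

/-- The second time derivative of `f_λ(t² - c²)`, with `t²` already rewritten as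
`(t² - c²) + c²`. -/
lemma deriv_deriv_time {lam : ℝ} (hlam : 2 < lam) (a c t : ℝ) :
    deriv (fun s => deriv (fun r : ℝ => a * gelfandShilov lam (r ^ 2 - c ^ 2)) s) t =
      a * ((4 * lam - 2) * gelfandShilov (lam - 1) (t ^ 2 - c ^ 2)
        + 4 * c ^ 2 * gelfandShilov (lam - 2) (t ^ 2 - c ^ 2)) := by
  have key : ∀ μ : ℝ, 1 < μ → ∀ s : ℝ, HasDerivAt (fun r : ℝ => gelfandShilov μ (r ^ 2 - c ^ 2))
      (gelfandShilov (μ - 1) (s ^ 2 - c ^ 2) * (2 * s)) s := by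
    intro μ hμ s
    have h1 : HasDerivAt (fun r : ℝ => r ^ 2 - c ^ 2) (2 * s) s := by
      simpa using ((hasDerivAt_id s).pow 2).sub_const (c ^ 2)
    exact (hasDerivAt_gelfandShilov hμ _).comp s h1
  have h1 : (fun s => deriv (fun r : ℝ => a * gelfandShilov lam (r ^ 2 - c ^ 2)) s) =
      fun s => a * (gelfandShilov (lam - 1) (s ^ 2 - c ^ 2) * (2 * s)) :=
    funext fun s => ((key lam (by linarith) s).const_mul a).deriv
  have h2 : HasDerivAt (fun s : ℝ => 2 * s) 2 t := by
    simpa using (hasDerivAt_id t).const_mul 2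
  rw [h1, (((key (lam - 1) (by linarith) t).fun_mul h2).const_mul a).deriv]
  have h3 := mul_gelfandShilov (μ := lam - 1) (by linarith) (t ^ 2 - c ^ 2)
  have e : lam - 1 - 1 = lam - 2 := by ring
  rw [e] at h3 ⊢
  linear_combination 4 * a * h3

/-- For `w(t,x) = v(x) f₊^λ(t² − τ(x)²)` with smooth data on an open set `U` and `λ > 2`,
`ρ ∂²_t w − ∇·(ν ∇w)` equals the stated combination of `f₊^{λ−2}`, `f₊^{λ−1}`, `f₊^λ`. -/
theorem hadamard_ansatz_residual (m : ℕ) (hm : 0 < m)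
    (U : Set (EuclideanSpace ℝ (Fin m))) (hU : IsOpen U)
    (ρ ν v τ : EuclideanSpace ℝ (Fin m) → ℝ)
    (hρ : ContDiffOn ℝ (⊤ : ℕ∞) ρ U) (hν : ContDiffOn ℝ (⊤ : ℕ∞) ν U)
    (hv : ContDiffOn ℝ (⊤ : ℕ∞) v U) (hτ : ContDiffOn ℝ (⊤ : ℕ∞) τ U)
    (lam : ℝ) (hlam : 2 < lam)
    (w : ℝ → EuclideanSpace ℝ (Fin m) → ℝ)
    (hw : w = fun t x => v x * gelfandShilov lam (t ^ 2 - (τ x) ^ 2)) :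
    ∀ (t : ℝ), ∀ x ∈ U,
      ρ x * deriv (fun s => deriv (fun r => w r x) s) t
          - sdiv (fun y => ν y • gradient (fun z => w t z) y) x =
        4 * v x * (τ x) ^ 2 * (ρ x - ν x * ‖gradient τ x‖ ^ 2)
            * gelfandShilov (lam - 2) (t ^ 2 - (τ x) ^ 2)
          + ((4 * lam - 2) * ρ x * v x + 2 * ν x * τ x * ⟪gradient τ x, gradient v x⟫
              + 2 * sdiv (fun y => (ν y * v y * τ y) • gradient τ y) x)
            * gelfandShilov (lam - 1) (t ^ 2 - (τ x) ^ 2)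
          - sdiv (fun y => ν y • gradient v y) x * gelfandShilov lam (t ^ 2 - (τ x) ^ 2) := by
  intro t x hx
  subst hw
  have hd : ∀ {f : EuclideanSpace ℝ (Fin m) → ℝ}, ContDiffOn ℝ (⊤ : ℕ∞) f U → ∀ y ∈ U,
      DifferentiableAt ℝ f y := fun hf y hy =>
    (hf.contDiffAt (hU.mem_nhds hy)).differentiableAt (by simp)
  have hflux : (fun y => ν y • gradient
        (fun z => v z * gelfandShilov lam (t ^ 2 - (τ z) ^ 2)) y) =ᶠ[nhds x]
      fun y => gelfandShilov lam (t ^ 2 - τ y ^ 2) • (ν y • gradient v y)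
        - gelfandShilov (lam - 1) (t ^ 2 - τ y ^ 2) •
            ((2 : ℝ) • ((ν y * v y * τ y) • gradient τ y)) := by
    filter_upwards [hU.mem_nhds hx] with y hy
    rw [(hasGradientAt_mul (hd hv y hy).hasGradientAt
      (hasGradientAt_gelfandShilov_comp (by linarith : 1 < lam) t (hd hτ y hy))).gradient]
    module
  have hA : DifferentiableAt ℝ (fun y => ν y • gradient v y) x :=
    (hd hν x hx).smul (differentiableAt_gradient hU hv hx)
  have hB : DifferentiableAt ℝ (fun y => (ν y * v y * τ y) • gradient τ y) x :=
    (((hd hν x hx).mul (hd hv x hx)).mul (hd hτ x hx)).smul (differentiableAt_gradient hU hτ hx)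
  have hB2 : DifferentiableAt ℝ (fun y => (2 : ℝ) • ((ν y * v y * τ y) • gradient τ y)) x :=
    hB.fun_const_smul 2
  have hf := hasGradientAt_gelfandShilov_comp (by linarith : 1 < lam) t (hd hτ x hx)
  have hg := hasGradientAt_gelfandShilov_comp (by linarith : 1 < lam - 1) t (hd hτ x hx)
  have h2 : sdiv (fun y => (2 : ℝ) • ((ν y * v y * τ y) • gradient τ y)) x =
      2 * sdiv (fun y => (ν y * v y * τ y) • gradient τ y) x := by
    simp only [sdiv, fderiv_fun_const_smul hB, Finset.mul_sum]
    simp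
  have hdiv := (sdiv_congr hflux).trans <|
    (sdiv_fun_sub (hf.differentiableAt.smul hA) (hg.differentiableAt.smul hB2)).trans <|
      congrArg₂ _ (sdiv_fun_smul hf hA) (sdiv_fun_smul hg hB2)
  have e : lam - 1 - 1 = lam - 2 := by ring
  beta_reduce
  rw [deriv_deriv_time hlam, hdiv, h2, e]
  simp only [real_inner_smul_left, real_inner_smul_right, real_inner_self_eq_norm_sq]
  ring
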